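/- Let P and Q be Borel probability measures on ℝ with finite p-th moment for some p ∈ [1,∞) (∫|x|^p dP < ∞ and ∫|x|^p dQ < ∞) and with P atomless. Let h : ℝ → [0,∞) be a strictly convex, nonnegative, Borel measurable function, and consider the cost c(x,y) = h(x−y). Then the map T = F_Q⁻¹ ∘ F_P, where F_P is the cdf of P and F_Q⁻¹ is the quantile function of Q, satisfies T_#P = Q and minimizes S ↦ ∫ h(x − S(x)) dP(x) over all measurable maps S : ℝ → ℝ with S_#P = Q; moreover, any measurable S with S_#P = Q achieving the same (finite) minimal value equals T P-almost everywhere. -/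

import Mathlib

/-!
Let `G` be the right-continuous derivative of the convex function `h`, and `dG` its Stieltjes
measure. Taylor's formula writes `h t - h 0 - G 0 * t` as
`∫_{s > 0} (t - s)⁺ dG(s) + ∫_{s ≤ 0} (s - t)⁺ dG(s)`, and for `t = x - y` the kernels are themselves
integrals over `u` of indicators of the sets `{y ≤ u, u + s ≤ x}` and `{u < y, x < u + s}`
(`crossSet`, `measure_crossSet_section`). By Tonelli, the cost of a map `S` is, up to an affine
part, the integral over `dG × du` of `P (S ≤ u, u + s ≤ x)` for `s > 0` and of
`P (S > u, x < u + s)` for `s ≤ 0` (`lintegral_defect_eq`). The affine part depends only on the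
means of `P` and `Q`, which are finite (`lintegral_ofReal_tilt`).

Optimality holds for each `(s, u)` separately. The mass of `{S ≤ u}` is `Q (Iic u)` for
every admissible `S`, and for the quantile map this set is almost everywhere the lower set
`{F_P ≤ F_Q u}`, hence nested with `{x < u + s}`; nested sets minimize both masses
(`measure_diff_le_of_nested`).

For uniqueness, equality of finite costs forces equality of these masses for `dG × du`-almost
every `(s, u)`. Strict convexity makes `G` strictly increasing, so these pairs are dense, and
right-continuity of joint distribution functions shows that `(x, S x)` and `(x, T x)` have
the same law (`measure_Iic_inter_le`). Both laws are then carried by the graph of `T`, so `S = T`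
almost everywhere (`ae_eq_of_forall_Iic`).
-/

open MeasureTheory ENNReal

/-- The cumulative distribution function of a measure `P` on `ℝ`. -/
noncomputable def cdfFun (P : MeasureTheory.Measure ℝ) (x : ℝ) : ℝ :=
  (P (Set.Iic x)).toReal

/-- The generalized inverse (quantile function) of the cdf of `Q`:
`F_Q⁻¹ p = inf {x : ℝ | F_Q x ≥ p}`. -/
noncomputable def quantileFun (Q : MeasureTheory.Measure ℝ) (p : ℝ) : ℝ :=
  sInf {x : ℝ | p ≤ cdfFun Q x}

/-! ### Second-order Taylor formula for convex functions -/

/-- The right-continuous version of the right derivative of a convex function integrates back to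
the function, even though the derivative itself may fail to exist at countably many points. -/
theorem ConvexOn.exists_stieltjes {h : ℝ → ℝ} (hconv : ConvexOn ℝ Set.univ h) :
    ∃ G : StieltjesFunction ℝ, ∀ a b : ℝ, ∫ r in a..b, G r = h b - h a := by
  have hmono : Monotone (fun x => derivWithin h (Set.Ioi x) x) := by
    have := hconv.monotoneOn_rightDeriv
    rwa [interior_univ, monotoneOn_univ] at this
  refine ⟨hmono.stieltjesFunction, fun a b => ?_⟩
  rw [← intervalIntegral.integral_eq_sub_of_hasDeriv_right (a := a) (b := b)
    ((hconv.continuousOn isOpen_univ).mono (Set.subset_univ _))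
    (fun x _ => hconv.hasDerivWithinAt_rightDeriv_of_mem_interior (by simp))
    (hmono.monotoneOn _).intervalIntegrable]
  -- the right derivative and its right limit differ only at countably many points
  have hae : ∀ᵐ r : ℝ, hmono.stieltjesFunction r = derivWithin h (Set.Ioi r) r := by
    filter_upwards [hmono.countable_not_continuousAt.ae_notMem volume] with r hr
    rw [hmono.stieltjesFunction_eq]
    have hr' : ContinuousAt (fun x => derivWithin h (Set.Ioi x) x) r := by simpa using hr
    exact hr'.continuousWithinAt.rightLim_eq
  exact intervalIntegral.integral_congr_ae (hae.mono fun r hr _ => hr)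

/-- If the derivative took equal values at `a < b`, the function would be affine on `[a, b]`. This is
where strictness of the convexity enters: the measure `dG` charges every interval. -/
theorem StieltjesFunction.strictMono_of_strictConvexOn {h : ℝ → ℝ}
    (hconv : StrictConvexOn ℝ Set.univ h) (G : StieltjesFunction ℝ)
    (hG : ∀ a b : ℝ, ∫ r in a..b, G r = h b - h a) : StrictMono G := by
  intro a b hab
  refine lt_of_le_of_ne (G.mono hab.le) fun heq => ?_
  have hlin : ∀ c ∈ Set.Icc a b, h c - h a = (c - a) * G a := by
    intro c hc
    rw [← hG a c, ← smul_eq_mul, ← intervalIntegral.integral_const]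
    refine intervalIntegral.integral_congr fun r hr => ?_
    rw [Set.uIcc_of_le hc.1] at hr
    exact le_antisymm ((G.mono (hr.2.trans hc.2)).trans_eq heq.symm) (G.mono hr.1)
  have h1 := hlin ((1 / 2 : ℝ) * a + (1 / 2 : ℝ) * b) ⟨by linarith, by linarith⟩
  have h2 := hlin b ⟨hab.le, le_rfl⟩
  have h3 := hconv.2 (Set.mem_univ a) (Set.mem_univ b) hab.ne
    (by norm_num : (0 : ℝ) < 1 / 2) (by norm_num : (0 : ℝ) < 1 / 2) (by norm_num)
  simp only [smul_eq_mul] at h3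
  linarith

/-- Taylor's formula at `0` for a convex function, before the Stieltjes measure `dG` is unfolded:
the height of the graph over the supporting line of slope `G 0`, as an integral of nonnegative
terms valid for both signs of `t`. -/
theorem lintegral_tangent_defect {h : ℝ → ℝ} (G : StieltjesFunction ℝ)
    (hG : ∀ a b : ℝ, ∫ r in a..b, G r = h b - h a) (t : ℝ) :
    ∫⁻ r : ℝ, (if r ≤ t then ENNReal.ofReal (G r - G 0) else ENNReal.ofReal (G 0 - G r)) =
      ENNReal.ofReal (h t - h 0 - G 0 * t) := by
  have hint : ∀ a b : ℝ, IntervalIntegrable G volume a b := fun a b =>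
    (G.mono.monotoneOn _).intervalIntegrable
  rcases le_total 0 t with ht | ht
  · have e : (fun r : ℝ => if r ≤ t then ENNReal.ofReal (G r - G 0) else ENNReal.ofReal (G 0 - G r))
        = (Set.Ioc 0 t).indicator (fun r => ENNReal.ofReal (G r - G 0)) := by
      funext r
      by_cases h1 : r ≤ t
      · by_cases h2 : 0 < r
        · simp [h1, h2]
        · simpa [h1, h2] using G.mono (not_lt.1 h2)
      · simpa [h1] using G.mono (ht.trans (not_le.1 h1).le)
    rw [e, lintegral_indicator measurableSet_Ioc, ← ofReal_integral_eq_lintegral_ofReal,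
      ← intervalIntegral.integral_of_le ht, intervalIntegral.integral_sub (hint _ _) (by simp), hG]
    · simp [mul_comm]
    · exact ((hint 0 t).sub (intervalIntegrable_const (c := G 0))).1
    · filter_upwards [ae_restrict_mem measurableSet_Ioc] with r hr
      exact sub_nonneg.2 (G.mono hr.1.le)
  · have e : (fun r : ℝ => if r ≤ t then ENNReal.ofReal (G r - G 0) else ENNReal.ofReal (G 0 - G r))
        = (Set.Ioc t 0).indicator (fun r => ENNReal.ofReal (G 0 - G r)) := by
      funext r
      by_cases h1 : r ≤ t
      · simpa [h1] using G.mono (h1.trans ht)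
      · by_cases h2 : r ≤ 0
        · simp [h1, h2, not_le.1 h1]
        · simpa [h1, h2] using G.mono (not_le.1 h2).le
    rw [e, lintegral_indicator measurableSet_Ioc, ← ofReal_integral_eq_lintegral_ofReal,
      ← intervalIntegral.integral_of_le ht, intervalIntegral.integral_sub (by simp) (hint _ _), hG]
    · simp only [intervalIntegral.integral_const, smul_eq_mul]; congr 1; ring
    · exact ((intervalIntegrable_const (c := G 0)).sub (hint t 0)).1
    · filter_upwards [ae_restrict_mem measurableSet_Ioc] with r hr
      exact sub_nonneg.2 (G.mono hr.2)

theorem tangent_defect_nonneg {h : ℝ → ℝ} (G : StieltjesFunction ℝ)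
    (hG : ∀ a b : ℝ, ∫ r in a..b, G r = h b - h a) (t : ℝ) :
    0 ≤ h t - h 0 - G 0 * t := by
  have hint : ∀ a b : ℝ, IntervalIntegrable G volume a b := fun a b =>
    (G.mono.monotoneOn _).intervalIntegrable
  rcases le_total 0 t with ht | ht
  · have := intervalIntegral.integral_mono_on (f := fun _ => G 0) ht
      intervalIntegrable_const (hint 0 t) (fun r hr => G.mono hr.1)
    rw [hG, intervalIntegral.integral_const, smul_eq_mul] at this
    linarith
  · have := intervalIntegral.integral_mono_on (g := fun _ => G 0) ht
      (hint t 0) intervalIntegrable_const (fun r hr => G.mono hr.2)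
    rw [hG, intervalIntegral.integral_const, smul_eq_mul] at this
    linarith

/-! ### The cost as a superposition of indicators -/

/-- The set of `((x, y), (s, u))` such that, for `s > 0`, the half-lines `y ≤ u` and `u + s ≤ x`
both contain their point, and for `s ≤ 0` the complementary half-lines do. Up to boundary points,
the length of its section in `u` is `(x - y - s)⁺` for `s > 0` and `(s - (x - y))⁺` for `s ≤ 0`. The
choice of weak and strict inequalities makes the sections in `s` half-open intervals `(·, ·]`, whose
Stieltjes measure is an increment of `G`. -/
def crossSet : Set ((ℝ × ℝ) × (ℝ × ℝ)) :=
  {q | (0 < q.2.1 ∧ q.1.2 ≤ q.2.2 ∧ q.2.2 + q.2.1 ≤ q.1.1) ∨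
    (q.2.1 ≤ 0 ∧ q.2.2 < q.1.2 ∧ q.1.1 < q.2.2 + q.2.1)}

theorem measurableSet_crossSet : MeasurableSet crossSet := by
  unfold crossSet
  measurability

/-- The cost `h (x - y)`, minus its supporting line at `0`, is the `dG × du`-measure of the section
of `crossSet` over `(x, y)`. -/
theorem measure_crossSet_section {h : ℝ → ℝ} (G : StieltjesFunction ℝ)
    (hG : ∀ a b : ℝ, ∫ r in a..b, G r = h b - h a) (w : ℝ × ℝ) :
    (G.measure.prod volume) (Prod.mk w ⁻¹' crossSet) =
      ENNReal.ofReal (h (w.1 - w.2) - h 0 - G 0 * (w.1 - w.2)) := by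
  rw [Measure.prod_apply_symm (measurable_prodMk_left measurableSet_crossSet),
    ← lintegral_tangent_defect G hG,
    ← lintegral_sub_left_eq_self (μ := (volume : Measure ℝ))
      (fun r => if r ≤ w.1 - w.2 then ENNReal.ofReal (G r - G 0) else ENNReal.ofReal (G 0 - G r))
      w.1]
  refine lintegral_congr fun u => ?_
  by_cases hu : w.2 ≤ u
  · rw [if_pos (by linarith), ← G.measure_Ioc]
    congr 1
    ext s
    simp [crossSet, hu, not_lt.2 hu, le_sub_iff_add_le, add_comm]
  · rw [if_neg (by linarith), ← G.measure_Ioc]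
    congr 1
    ext s
    simp [crossSet, hu, not_le.1 hu, sub_lt_iff_lt_add, add_comm, and_comm]

/-! ### Distribution and quantile functions -/

theorem cdfFun_eq_cdf (P : Measure ℝ) [IsProbabilityMeasure P] :
    cdfFun P = ProbabilityTheory.cdf P := by
  funext x
  rw [ProbabilityTheory.cdf_eq_real]
  rfl

/-- Galois connection between quantile function and cdf. It is restricted to levels in `(0, 1)`,
since outside this range the infimum may be over an empty or unbounded set. -/
theorem quantileFun_le_iff (Q : Measure ℝ) [IsProbabilityMeasure Q] {q : ℝ}
    (hq : q ∈ Set.Ioo (0 : ℝ) 1) (u : ℝ) : quantileFun Q q ≤ u ↔ q ≤ cdfFun Q u := by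
  unfold quantileFun
  rw [cdfFun_eq_cdf]
  have hne : {x : ℝ | q ≤ ProbabilityTheory.cdf Q x}.Nonempty :=
    (((ProbabilityTheory.tendsto_cdf_atTop Q).eventually_const_lt hq.2).exists).imp
      fun _ hx => hx.le
  have hbdd : BddBelow {x : ℝ | q ≤ ProbabilityTheory.cdf Q x} := by
    obtain ⟨m, hm⟩ := ((ProbabilityTheory.tendsto_cdf_atBot Q).eventually_lt_const hq.1).exists
    refine ⟨m, fun x hx => ?_⟩
    by_contra hlt
    exact absurd (hx.trans (ProbabilityTheory.monotone_cdf Q (not_le.1 hlt).le)) (not_le.2 hm)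
  refine ⟨fun hu => ?_, fun hu => csInf_le hbdd hu⟩
  have hright := ((ProbabilityTheory.cdf Q).right_continuous u).mono Set.Ioi_subset_Ici_self
  refine ge_of_tendsto hright ?_
  filter_upwards [self_mem_nhdsWithin] with v hv
  obtain ⟨x, hx, hxv⟩ := exists_lt_of_csInf_lt hne (lt_of_le_of_lt hu hv)
  exact le_trans hx (ProbabilityTheory.monotone_cdf Q hxv.le)

theorem continuous_cdfFun (P : Measure ℝ) [IsProbabilityMeasure P] (hP : ∀ x : ℝ, P {x} = 0) :
    Continuous (cdfFun P) := by
  rw [cdfFun_eq_cdf, continuous_iff_continuousAt]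
  intro x
  rw [(ProbabilityTheory.monotone_cdf P).continuousAt_iff_leftLim_eq_rightLim,
    (ProbabilityTheory.cdf P).rightLim_eq]
  have h1 := (ProbabilityTheory.cdf P).measure_singleton x
  rw [ProbabilityTheory.measure_cdf, hP, eq_comm, ENNReal.ofReal_eq_zero] at h1
  exact le_antisymm ((ProbabilityTheory.monotone_cdf P).leftLim_le le_rfl) (by linarith)

/-- The cdf of an atomless law is uniformly distributed on `[0, 1]` under that law. -/
theorem measure_cdfFun_le (P : Measure ℝ) [IsProbabilityMeasure P] (hP : ∀ x : ℝ, P {x} = 0)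
    {q : ℝ} (hq : q ∈ Set.Icc (0 : ℝ) 1) : P {x | cdfFun P x ≤ q} = ENNReal.ofReal q := by
  have hcont := continuous_cdfFun P hP
  have hmono : Monotone (cdfFun P) := by
    rw [cdfFun_eq_cdf]; exact ProbabilityTheory.monotone_cdf P
  have hbot : Filter.Tendsto (cdfFun P) Filter.atBot (nhds 0) := by
    rw [cdfFun_eq_cdf]; exact ProbabilityTheory.tendsto_cdf_atBot P
  have htop : Filter.Tendsto (cdfFun P) Filter.atTop (nhds 1) := by
    rw [cdfFun_eq_cdf]; exact ProbabilityTheory.tendsto_cdf_atTop P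
  have hof : ∀ x, ENNReal.ofReal (cdfFun P x) = P (Set.Iic x) := fun x =>
    ENNReal.ofReal_toReal (measure_ne_top P _)
  have hmid : ∀ q ∈ Set.Ioo (0 : ℝ) 1, P {x | cdfFun P x ≤ q} = ENNReal.ofReal q := by
    intro q hq
    obtain ⟨v, hv⟩ : ∃ v, cdfFun P v = q :=
      mem_range_of_exists_le_of_exists_ge hcont
        ((hbot.eventually_lt_const hq.1).exists.imp fun _ hx => hx.le)
        ((htop.eventually_const_lt hq.2).exists.imp fun _ hx => hx.le)
    have hbdd : BddAbove {x | cdfFun P x ≤ q} := by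
      obtain ⟨m, hm⟩ := (htop.eventually_const_lt hq.2).exists
      refine ⟨m, fun x hx => ?_⟩
      by_contra hlt
      exact absurd ((hmono (not_le.1 hlt).le).trans hx) (not_le.2 hm)
    have hmem : sSup {x | cdfFun P x ≤ q} ∈ {x | cdfFun P x ≤ q} :=
      (isClosed_le hcont continuous_const).csSup_mem ⟨v, hv.le⟩ hbdd
    refine le_antisymm ?_ ?_
    · calc P {x | cdfFun P x ≤ q} ≤ P (Set.Iic (sSup {x | cdfFun P x ≤ q})) :=
            measure_mono fun x hx => le_csSup hbdd hx
        _ ≤ ENNReal.ofReal q := by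
            rw [← hof]; exact ENNReal.ofReal_le_ofReal hmem
    · rw [← hv, hof]
      exact measure_mono fun x hx => hmono hx
  rcases eq_or_lt_of_le hq.1 with h0 | h0
  · rw [← h0, ENNReal.ofReal_zero]
    refine le_antisymm (ENNReal.le_of_forall_pos_le_add fun ε hε _ => ?_) zero_le
    have hmin : min (ε : ℝ) (1 / 2) ∈ Set.Ioo (0 : ℝ) 1 :=
      ⟨lt_min (by exact_mod_cast hε) (by norm_num),
        lt_of_le_of_lt (min_le_right _ _) (by norm_num)⟩
    calc P {x | cdfFun P x ≤ 0} ≤ P {x | cdfFun P x ≤ min (ε : ℝ) (1 / 2)} :=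
          measure_mono fun x hx => le_trans hx hmin.1.le
      _ = ENNReal.ofReal (min (ε : ℝ) (1 / 2)) := hmid _ hmin
      _ ≤ ENNReal.ofReal ε := ENNReal.ofReal_le_ofReal (min_le_left _ _)
      _ = 0 + ε := by simp
  rcases eq_or_lt_of_le hq.2 with h1 | h1
  · have : {x | cdfFun P x ≤ q} = Set.univ := by
      ext x
      simp only [Set.mem_ofPred_eq, Set.mem_univ, iff_true]
      rw [h1, cdfFun_eq_cdf]
      exact ProbabilityTheory.cdf_le_one P x
    rw [this, h1]
    simp
  · exact hmid q ⟨h0, h1⟩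

theorem ae_cdfFun_mem_Ioo (P : Measure ℝ) [IsProbabilityMeasure P] (hP : ∀ x : ℝ, P {x} = 0) :
    ∀ᵐ x ∂P, cdfFun P x ∈ Set.Ioo (0 : ℝ) 1 := by
  have h0 : ∀ᵐ x ∂P, ¬ cdfFun P x ≤ 0 := by
    rw [ae_iff]
    simpa using measure_cdfFun_le P hP (q := 0) (by simp)
  have h1 : ∀ᵐ x ∂P, ¬ 1 ≤ cdfFun P x := by
    rw [ae_iff]
    simp only [not_not]
    refine le_antisymm (ENNReal.le_of_forall_pos_le_add fun ε hε _ => ?_) zero_le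
    have hq : max (1 - (ε : ℝ)) 0 ∈ Set.Icc (0 : ℝ) 1 :=
      ⟨le_max_right _ _, max_le (by simp) zero_le_one⟩
    have hlt : max (1 - (ε : ℝ)) 0 < 1 := max_lt (by simpa using hε) one_pos
    have hms : MeasurableSet {x | cdfFun P x ≤ max (1 - (ε : ℝ)) 0} :=
      (isClosed_le (continuous_cdfFun P hP) continuous_const).measurableSet
    calc P {x | 1 ≤ cdfFun P x} ≤ P {x | cdfFun P x ≤ max (1 - (ε : ℝ)) 0}ᶜ :=
          measure_mono fun x hx => not_le.2 (lt_of_lt_of_le hlt hx)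
      _ = 1 - ENNReal.ofReal (max (1 - (ε : ℝ)) 0) := by
          rw [prob_compl_eq_one_sub hms, measure_cdfFun_le P hP hq]
      _ = ENNReal.ofReal (1 - max (1 - (ε : ℝ)) 0) := by
          rw [ENNReal.ofReal_sub _ hq.1, ENNReal.ofReal_one]
      _ ≤ ENNReal.ofReal ε := ENNReal.ofReal_le_ofReal (by
          linarith [le_max_left (1 - (ε : ℝ)) 0])
      _ = 0 + ε := by simp
  filter_upwards [h0, h1] with x hx0 hx1
  exact ⟨not_le.1 hx0, not_le.1 hx1⟩

/-- Only almost everywhere measurability is obtained, from monotonicity on the full-measure set where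
the quantile function is not evaluated at levels with junk values. -/
theorem aemeasurable_quantile_cdf (P Q : Measure ℝ) [IsProbabilityMeasure P]
    [IsProbabilityMeasure Q] (hP : ∀ x : ℝ, P {x} = 0) :
    AEMeasurable (fun x => quantileFun Q (cdfFun P x)) P := by
  have hE : MeasurableSet (cdfFun P ⁻¹' Set.Ioo (0 : ℝ) 1) :=
    (continuous_cdfFun P hP).measurable measurableSet_Ioo
  have hmono : MonotoneOn (fun x => quantileFun Q (cdfFun P x)) (cdfFun P ⁻¹' Set.Ioo (0 : ℝ) 1) := by
    intro x hx y hy hxy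
    have hle : cdfFun P x ≤ cdfFun P y := by
      rw [cdfFun_eq_cdf]; exact ProbabilityTheory.monotone_cdf P hxy
    exact (quantileFun_le_iff Q hx _).2 (hle.trans ((quantileFun_le_iff Q hy _).1 le_rfl))
  have := aemeasurable_restrict_of_monotoneOn (μ := P) hE hmono
  rwa [Measure.restrict_eq_self_of_ae_mem (s := cdfFun P ⁻¹' Set.Ioo (0 : ℝ) 1) (ae_cdfFun_mem_Ioo P hP)] at this

theorem map_quantile_cdf (P Q : Measure ℝ) [IsProbabilityMeasure P]
    [IsProbabilityMeasure Q] (hP : ∀ x : ℝ, P {x} = 0) :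
    Measure.map (fun x => quantileFun Q (cdfFun P x)) P = Q := by
  have hT := aemeasurable_quantile_cdf P Q hP
  have := Measure.isProbabilityMeasure_map hT
  refine Measure.ext_of_Iic _ _ fun u => ?_
  have hQ : cdfFun Q u ∈ Set.Icc (0 : ℝ) 1 := by
    rw [cdfFun_eq_cdf]
    exact ⟨ProbabilityTheory.cdf_nonneg Q u, ProbabilityTheory.cdf_le_one Q u⟩
  rw [Measure.map_apply_of_aemeasurable hT measurableSet_Iic]
  calc P ((fun x => quantileFun Q (cdfFun P x)) ⁻¹' Set.Iic u) = P {x | cdfFun P x ≤ cdfFun Q u} := by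
        refine measure_congr ?_
        filter_upwards [ae_cdfFun_mem_Ioo P hP] with x hx
        exact propext (quantileFun_le_iff Q hx u)
    _ = Q (Set.Iic u) := by
        rw [measure_cdfFun_le P hP hQ]
        exact ENNReal.ofReal_toReal (measure_ne_top Q _)

/-! ### Integrability and the affine part of the cost -/

/-- Two nonnegative functions differing by an integrable `L` have integrals differing by `∫ L`. The
identity is arranged so as to make sense, and hold, also when both integrals are infinite. -/
theorem lintegral_ofReal_tilt {α : Type*} [MeasurableSpace α] {P : Measure α} {a b L : α → ℝ}
    (ha : Measurable a) (hb : Measurable b) (ha0 : ∀ x, 0 ≤ a x) (hb0 : ∀ x, 0 ≤ b x)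
    (hab : ∀ x, a x = b x + L x) (hL : Integrable L P) :
    ∫⁻ x, ENNReal.ofReal (a x) ∂P + ENNReal.ofReal (-∫ x, L x ∂P) =
      ∫⁻ x, ENNReal.ofReal (b x) ∂P + ENNReal.ofReal (∫ x, L x ∂P) := by
  set lp := ∫⁻ x, ENNReal.ofReal (L x) ∂P with hlp
  set lm := ∫⁻ x, ENNReal.ofReal (-L x) ∂P with hlm
  have hlpt : lp ≠ ⊤ := hL.lintegral_lt_top.ne
  have hlmt : lm ≠ ⊤ := hL.neg.lintegral_lt_top.ne
  have hsplit : ∫⁻ x, ENNReal.ofReal (a x) ∂P + lm = ∫⁻ x, ENNReal.ofReal (b x) ∂P + lp := by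
    rw [hlp, hlm, ← lintegral_add_left ha.ennreal_ofReal, ← lintegral_add_left hb.ennreal_ofReal]
    refine lintegral_congr fun x => ?_
    rcases le_total 0 (L x) with hx | hx
    · rw [ENNReal.ofReal_of_nonpos (by linarith : -L x ≤ 0), add_zero, hab,
        ENNReal.ofReal_add (hb0 x) hx]
    · rw [ENNReal.ofReal_of_nonpos hx, add_zero, ← ENNReal.ofReal_add (ha0 x) (by linarith), hab]
      congr 1
      ring
  have hdiff : lp + ENNReal.ofReal (-∫ x, L x ∂P) = lm + ENNReal.ofReal (∫ x, L x ∂P) := by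
    have hI : ∫ x, L x ∂P = lp.toReal - lm.toReal :=
      integral_eq_lintegral_pos_part_sub_lintegral_neg_part hL
    rw [hI, ← ENNReal.ofReal_toReal hlpt, ← ENNReal.ofReal_toReal hlmt]
    simp only [ENNReal.toReal_ofReal ENNReal.toReal_nonneg]
    rcases le_total lm.toReal lp.toReal with hx | hx
    · rw [ENNReal.ofReal_of_nonpos (by linarith : -(lp.toReal - lm.toReal) ≤ 0), add_zero,
        ← ENNReal.ofReal_add ENNReal.toReal_nonneg (by linarith)]
      congr 1; ring
    · rw [ENNReal.ofReal_of_nonpos (sub_nonpos.2 hx), add_zero,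
        ← ENNReal.ofReal_add ENNReal.toReal_nonneg (by linarith)]
      congr 1; ring
  refine (ENNReal.add_left_inj hlmt).1 ?_
  rw [add_right_comm, hsplit, add_assoc, hdiff, ← add_assoc, add_right_comm]

theorem integrable_id_of_moment {P : Measure ℝ} [IsProbabilityMeasure P] {p : ℝ} (hp : 1 ≤ p)
    (hPmom : ∫⁻ x, ENNReal.ofReal (|x| ^ p) ∂P ≠ ⊤) : Integrable (fun x : ℝ => x) P := by
  refine ⟨measurable_id.aestronglyMeasurable, ?_⟩
  rw [hasFiniteIntegral_iff_norm]
  calc ∫⁻ x, ENNReal.ofReal ‖x‖ ∂P ≤ ∫⁻ x, (1 + ENNReal.ofReal (|x| ^ p)) ∂P := by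
        refine lintegral_mono fun x => ?_
        rw [← ENNReal.ofReal_one, ← ENNReal.ofReal_add zero_le_one (by positivity)]
        refine ENNReal.ofReal_le_ofReal ?_
        rw [Real.norm_eq_abs]
        rcases le_total |x| 1 with hx | hx
        · have : 0 ≤ |x| ^ p := by positivity
          linarith
        · have := Real.rpow_le_rpow_of_exponent_le hx hp
          rw [Real.rpow_one] at this
          linarith
    _ < ⊤ := by
        rw [lintegral_add_left measurable_const]
        simpa [lt_top_iff_ne_top] using hPmom

/-! ### Comparison of an arbitrary map with the quantile map -/

/-- Among sets of a given mass, one that is nested with `A` minimizes both `P (· \ A)` and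
`P (A \ ·)`. Nestedness is only required of a set `D` almost everywhere equal to `B`. -/
theorem measure_diff_le_of_nested {α : Type*} [MeasurableSpace α] {P : Measure α}
    [IsFiniteMeasure P] {A B C D : Set α} (hA : MeasurableSet A) (hB : MeasurableSet B)
    (hBC : P B = P C) (hBD : B =ᵐ[P] D) (hnest : D ⊆ A ∨ A ⊆ D) :
    P (B \ A) ≤ P (C \ A) ∧ P (A \ B) ≤ P (A \ C) := by
  have e1 : P (B \ A) = P (D \ A) := measure_congr (hBD.diff (ae_eq_refl A))
  have e2 : P (A \ B) = P (A \ D) := measure_congr ((ae_eq_refl A).diff hBD)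
  have hD : NullMeasurableSet D P := hB.nullMeasurableSet.congr hBD
  have hDC : P D = P C := (measure_congr hBD).symm.trans hBC
  rw [e1, e2]
  rcases hnest with hsub | hsub
  · rw [Set.sdiff_eq_empty.2 hsub, measure_empty, measure_sdiff hsub hD (measure_ne_top _ _), hDC]
    exact ⟨zero_le, le_measure_sdiff⟩
  · rw [Set.sdiff_eq_empty.2 hsub, measure_empty,
      measure_sdiff hsub hA.nullMeasurableSet (measure_ne_top _ _), hDC]
    exact ⟨le_measure_sdiff, zero_le⟩

theorem section_crossSet (P : Measure ℝ) (S : ℝ → ℝ) (s u : ℝ) :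
    P {x | ((x, S x), (s, u)) ∈ crossSet} =
      if 0 < s then P (S ⁻¹' Set.Iic u \ Set.Iio (u + s))
        else P (Set.Iio (u + s) \ S ⁻¹' Set.Iic u) := by
  split_ifs with hs
  · congr 1
    ext x
    simp [crossSet, hs, not_le.2 hs]
  · congr 1
    ext x
    simp [crossSet, hs, not_lt.1 hs, and_comm]

/-- The transport cost of `S`, up to the affine part of `h`, as a superposition of the masses
of simple sets. -/
theorem lintegral_defect_eq (P : Measure ℝ) [IsProbabilityMeasure P]
    {h : ℝ → ℝ} (G : StieltjesFunction ℝ)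
    (hG : ∀ a b : ℝ, ∫ r in a..b, G r = h b - h a) {S : ℝ → ℝ} (hS : Measurable S) :
    ∫⁻ x, ENNReal.ofReal (h (x - S x) - h 0 - G 0 * (x - S x)) ∂P =
      ∫⁻ z, P {x | ((x, S x), z) ∈ crossSet} ∂(G.measure.prod volume) := by
  have hm : MeasurableSet {q : ℝ × (ℝ × ℝ) | ((q.1, S q.1), q.2) ∈ crossSet} :=
    (by fun_prop : Measurable fun q : ℝ × (ℝ × ℝ) => ((q.1, S q.1), q.2)) measurableSet_crossSet
  have h1 := Measure.prod_apply (μ := P) (ν := G.measure.prod volume) hm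
  rw [Measure.prod_apply_symm hm] at h1
  rw [← lintegral_congr fun x => measure_crossSet_section G hG (x, S x)]
  exact h1.symm

theorem measurable_section_crossSet (P : Measure ℝ) [IsProbabilityMeasure P] {S : ℝ → ℝ}
    (hS : Measurable S) : Measurable fun z => P {x | ((x, S x), z) ∈ crossSet} :=
  measurable_measure_prodMk_right
    ((by fun_prop : Measurable fun q : ℝ × (ℝ × ℝ) => ((q.1, S q.1), q.2)) measurableSet_crossSet)

/-- Maps with the same joint law with the identity agree almost everywhere: the law of `(x, S x)` is
carried by the graph of `T`. -/
theorem ae_eq_of_forall_Iic {P : Measure ℝ} [IsProbabilityMeasure P] {S T : ℝ → ℝ}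
    (hS : Measurable S) (hT : Measurable T)
    (hST : ∀ v u, P (Set.Iic v ∩ S ⁻¹' Set.Iic u) = P (Set.Iic v ∩ T ⁻¹' Set.Iic u)) :
    S =ᵐ[P] T := by
  have hS' : Measurable fun x => (x, S x) := by fun_prop
  have hT' : Measurable fun x => (x, T x) := by fun_prop
  have hlaw : P.map (fun x => (x, S x)) = P.map (fun x => (x, T x)) := by
    have hspan : IsCountablySpanning (Set.range (Set.Iic : ℝ → Set ℝ)) := by
      refine ⟨fun n => Set.Iic (n : ℝ), fun n => ⟨n, rfl⟩, ?_⟩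
      ext x
      simpa using exists_nat_ge x
    have hgen : MeasurableSpace.generateFrom (Set.range (Set.Iic : ℝ → Set ℝ)) =
        (inferInstance : MeasurableSpace ℝ) := by
      rw [← borel_eq_generateFrom_Iic, BorelSpace.measurable_eq (α := ℝ)]
    have := Measure.isFiniteMeasure_map P (fun x => (x, S x))
    refine ext_of_generate_finite _ (generateFrom_eq_prod hgen hgen hspan hspan).symm
      (isPiSystem_Iic.prod isPiSystem_Iic) ?_ ?_
    · rintro _ ⟨_, ⟨v, rfl⟩, _, ⟨u, rfl⟩, rfl⟩
      rw [Measure.map_apply hS' (measurableSet_Iic.prod measurableSet_Iic),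
        Measure.map_apply hT' (measurableSet_Iic.prod measurableSet_Iic)]
      exact hST v u
    · rw [Measure.map_apply hS' .univ, Measure.map_apply hT' .univ]
      rfl
  have hgraph : MeasurableSet {w : ℝ × ℝ | w.2 ≠ T w.1} :=
    (measurableSet_eq_fun measurable_snd (hT.comp measurable_fst)).compl
  have h0 : P.map (fun x => (x, S x)) {w : ℝ × ℝ | w.2 ≠ T w.1} = 0 := by
    rw [hlaw, Measure.map_apply hT' hgraph]
    simp
  rw [Measure.map_apply hS' hgraph] at h0
  exact ae_iff.2 h0

/-- Agreement of the joint distribution functions at points arbitrarily close to, and strictly above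
and to the right of, each point gives one inequality everywhere by right-continuity. -/
theorem measure_Iic_inter_le {P : Measure ℝ} [IsProbabilityMeasure P] {S T : ℝ → ℝ}
    (hT : Measurable T)
    (hgood : ∀ s u ε : ℝ, 0 < ε → ∃ s' ∈ Set.Ioo s (s + ε), ∃ u' ∈ Set.Ioo u (u + ε),
      P (Set.Iio (u' + s') ∩ S ⁻¹' Set.Iic u') = P (Set.Iio (u' + s') ∩ T ⁻¹' Set.Iic u'))
    (v u : ℝ) : P (Set.Iic v ∩ S ⁻¹' Set.Iic u) ≤ P (Set.Iic v ∩ T ⁻¹' Set.Iic u) := by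
  have hlim : Filter.Tendsto
      (fun n : ℕ => P (Set.Iic (v + 2 * (1 / ((n : ℝ) + 1))) ∩ T ⁻¹' Set.Iic (u + 1 / ((n : ℝ) + 1))))
      Filter.atTop (nhds (P (Set.Iic v ∩ T ⁻¹' Set.Iic u))) := by
    have hinter : Set.Iic v ∩ T ⁻¹' Set.Iic u = ⋂ n : ℕ,
        (Set.Iic (v + 2 * (1 / ((n : ℝ) + 1))) ∩ T ⁻¹' Set.Iic (u + 1 / ((n : ℝ) + 1))) := by
      ext x
      simp only [Set.mem_inter_iff, Set.mem_Iic, Set.mem_preimage, Set.mem_iInter]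
      refine ⟨fun hx n => ?_, fun hx => ⟨?_, ?_⟩⟩
      · have : 0 < 1 / ((n : ℝ) + 1) := by positivity
        exact ⟨by linarith [hx.1], by linarith [hx.2]⟩
      · refine ge_of_tendsto' (x := Filter.atTop) ?_ fun n => (hx n).1
        simpa using (tendsto_one_div_add_atTop_nhds_zero_nat (𝕜 := ℝ)).const_mul 2 |>.const_add v
      · refine ge_of_tendsto' (x := Filter.atTop) ?_ fun n => (hx n).2
        simpa using (tendsto_one_div_add_atTop_nhds_zero_nat (𝕜 := ℝ)).const_add u
    rw [hinter]
    refine tendsto_measure_iInter_atTop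
      (fun n => (measurableSet_Iic.inter (hT measurableSet_Iic)).nullMeasurableSet) ?_
      ⟨0, measure_ne_top _ _⟩
    intro m n hmn x hx
    have hle : 1 / ((n : ℝ) + 1) ≤ 1 / ((m : ℝ) + 1) := Nat.one_div_le_one_div hmn
    simp only [Set.mem_inter_iff, Set.mem_Iic, Set.mem_preimage] at hx ⊢
    exact ⟨by linarith [hx.1], by linarith [hx.2]⟩
  refine ge_of_tendsto' hlim fun n => ?_
  obtain ⟨s', hs', u', hu', heq⟩ := hgood (v - u) u (1 / ((n : ℝ) + 1)) (by positivity)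
  calc P (Set.Iic v ∩ S ⁻¹' Set.Iic u) ≤ P (Set.Iio (u' + s') ∩ S ⁻¹' Set.Iic u') := by
        refine measure_mono fun x hx => ⟨?_, hx.2.trans hu'.1.le⟩
        have := hx.1
        simp only [Set.mem_Iic, Set.mem_Iio, Set.mem_Ioo] at *
        linarith
    _ = P (Set.Iio (u' + s') ∩ T ⁻¹' Set.Iic u') := heq
    _ ≤ _ := by
        refine measure_mono fun x hx => ⟨?_, hx.2.trans hu'.2.le⟩
        have := hx.1
        simp only [Set.mem_Iic, Set.mem_Iio, Set.mem_Ioo] at *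
        linarith

/-- Corollary 2 of the paper: for Borel probability measures `P`, `Q` on `ℝ` with finite
`p`-th moments (`p ∈ [1,∞)`) and `P` atomless, and a strictly convex, nonnegative, Borel
measurable `h`, the map `T = F_Q⁻¹ ∘ F_P` pushes `P` to `Q`, minimizes
`S ↦ ∫ h (x - S x) dP x` among measurable maps pushing `P` to `Q`, and is the
`P`-a.e. unique such minimizer (when the minimal value is finite). -/
theorem monge_optimal_map_on_real_line
    (P Q : Measure ℝ) [IsProbabilityMeasure P] [IsProbabilityMeasure Q]
    (p : ℝ) (hp : 1 ≤ p)
    (hPmom : ∫⁻ x, ENNReal.ofReal (|x| ^ p) ∂P ≠ ⊤)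
    (hQmom : ∫⁻ x, ENNReal.ofReal (|x| ^ p) ∂Q ≠ ⊤)
    (hP : ∀ x : ℝ, P {x} = 0)
    (h : ℝ → ℝ) (hconv : StrictConvexOn ℝ Set.univ h)
    (hpos : ∀ t : ℝ, 0 ≤ h t) (hmeas : Measurable h) :
    Measure.map (fun x => quantileFun Q (cdfFun P x)) P = Q ∧
    (∀ S : ℝ → ℝ, Measurable S → Measure.map S P = Q →
      ∫⁻ x, ENNReal.ofReal (h (x - quantileFun Q (cdfFun P x))) ∂P ≤
        ∫⁻ x, ENNReal.ofReal (h (x - S x)) ∂P) ∧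
    (∀ S : ℝ → ℝ, Measurable S → Measure.map S P = Q →
      ∫⁻ x, ENNReal.ofReal (h (x - S x)) ∂P =
          ∫⁻ x, ENNReal.ofReal (h (x - quantileFun Q (cdfFun P x))) ∂P →
      ∫⁻ x, ENNReal.ofReal (h (x - quantileFun Q (cdfFun P x))) ∂P ≠ ⊤ →
      S =ᵐ[P] fun x => quantileFun Q (cdfFun P x)) := by
  obtain ⟨G, hG⟩ := hconv.convexOn.exists_stieltjes
  have hGmono := G.strictMono_of_strictConvexOn hconv hG
  have hmap := map_quantile_cdf P Q hP
  refine ⟨hmap, ?_⟩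
  have hTae := aemeasurable_quantile_cdf P Q hP
  -- `T` is a Borel version of the quantile map
  set T : ℝ → ℝ := hTae.mk _ with hTdef
  have hT : Measurable T := hTae.measurable_mk
  have hTeq : (fun x => quantileFun Q (cdfFun P x)) =ᵐ[P] T := hTae.ae_eq_mk
  have hTmap : Measure.map T P = Q := by rw [← hmap]; exact (Measure.map_congr hTeq).symm
  have hcostT : ∫⁻ x, ENNReal.ofReal (h (x - quantileFun Q (cdfFun P x))) ∂P =
      ∫⁻ x, ENNReal.ofReal (h (x - T x)) ∂P :=
    lintegral_congr_ae (hTeq.mono fun x hx => by simp only [← hx])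
  simp only [hcostT]
  have hIP : Integrable (fun x : ℝ => x) P := integrable_id_of_moment hp hPmom
  have hIQ : Integrable (fun x : ℝ => x) Q := integrable_id_of_moment hp hQmom
  obtain ⟨m, hm⟩ : ∃ m : ℝ, ∀ S : ℝ → ℝ, Measurable S → Measure.map S P = Q →
      ∫⁻ x, ENNReal.ofReal (h (x - S x)) ∂P + ENNReal.ofReal (-m) =
        ∫⁻ z, P {x | ((x, S x), z) ∈ crossSet} ∂(G.measure.prod volume) + ENNReal.ofReal m := by
    refine ⟨h 0 + G 0 * (∫ x, x ∂P - ∫ y, y ∂Q), fun S hS hSQ => ?_⟩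
    have hIS : Integrable S P := by
      rw [← hSQ] at hIQ
      exact (integrable_map_measure measurable_id.aestronglyMeasurable hS.aemeasurable).1 hIQ
    have hID : Integrable (fun x => x - S x) P := hIP.sub hIS
    have hint : ∫ x, (h 0 + G 0 * (x - S x)) ∂P = h 0 + G 0 * (∫ x, x ∂P - ∫ y, y ∂Q) := by
      rw [integral_add (integrable_const _) (hID.const_mul _), integral_const_mul,
        integral_sub hIP hIS, ← hSQ,
        integral_map (f := fun y : ℝ => y) hS.aemeasurable measurable_id.aestronglyMeasurable]
      simp
    have hD : Measurable fun x => x - S x := measurable_id.sub hS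
    have := lintegral_ofReal_tilt (P := P) (a := fun x => h (x - S x))
      (b := fun x => h (x - S x) - h 0 - G 0 * (x - S x)) (L := fun x => h 0 + G 0 * (x - S x))
      (hmeas.comp hD) (((hmeas.comp hD).sub_const _).sub (hD.const_mul _))
      (fun x => hpos _) (fun x => tangent_defect_nonneg G hG _) (fun x => by ring)
      ((integrable_const _).add (hID.const_mul _))
    rwa [hint, lintegral_defect_eq P G hG hS] at this
  have hPA : ∀ S : ℝ → ℝ, Measurable S → Measure.map S P = Q →
      ∀ u, P (T ⁻¹' Set.Iic u) = P (S ⁻¹' Set.Iic u) := by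
    intro S hS hSQ u
    rw [← Measure.map_apply hS measurableSet_Iic, ← Measure.map_apply hT measurableSet_Iic,
      hSQ, hTmap]
  have hkey : ∀ S : ℝ → ℝ, Measurable S → Measure.map S P = Q → ∀ z : ℝ × ℝ,
      P {x | ((x, T x), z) ∈ crossSet} ≤ P {x | ((x, S x), z) ∈ crossSet} := by
    rintro S hS hSQ ⟨s, u⟩
    have hBD : T ⁻¹' Set.Iic u =ᵐ[P] {x | cdfFun P x ≤ cdfFun Q u} := by
      filter_upwards [ae_cdfFun_mem_Ioo P hP, hTeq] with x hx hxT
      refine propext ?_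
      change T x ≤ u ↔ _
      rw [← hxT]
      exact quantileFun_le_iff Q hx u
    have hnest : {x | cdfFun P x ≤ cdfFun Q u} ⊆ Set.Iio (u + s) ∨
        Set.Iio (u + s) ⊆ {x | cdfFun P x ≤ cdfFun Q u} := by
      refine or_iff_not_imp_left.2 fun hnot => ?_
      obtain ⟨d, hd, hdv⟩ := Set.not_subset.1 hnot
      intro x hx
      have hxd : x ≤ d := (lt_of_lt_of_le hx (not_lt.1 hdv)).le
      refine le_trans (b := cdfFun P d) ?_ hd
      rw [cdfFun_eq_cdf]
      exact ProbabilityTheory.monotone_cdf P hxd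
    have := measure_diff_le_of_nested (P := P) (measurableSet_Iio (a := u + s))
      (hT (measurableSet_Iic (a := u))) (hPA S hS hSQ u) hBD hnest
    rw [section_crossSet, section_crossSet]
    split_ifs
    · exact this.1
    · exact this.2
  refine ⟨fun S hS hSQ => ?_, fun S hS hSQ heq hfin => ?_⟩
  · refine (ENNReal.add_le_add_iff_right (ENNReal.ofReal_ne_top (r := -m))).1 ?_
    rw [hm S hS hSQ, hm T hT hTmap]
    exact add_le_add_left (lintegral_mono (hkey S hS hSQ)) _
  · have hmT := hm T hT hTmap
    have hmS := hm S hS hSQ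
    rw [heq, hmT] at hmS
    have hIeq := (ENNReal.add_left_inj ENNReal.ofReal_ne_top).1 hmS
    have hIfin : ∫⁻ z, P {x | ((x, T x), z) ∈ crossSet} ∂(G.measure.prod volume) ≠ ⊤ := by
      refine ne_top_of_le_ne_top (ENNReal.add_ne_top.2 ⟨hfin, ENNReal.ofReal_ne_top⟩)
        (le_of_le_of_eq le_self_add hmT.symm)
    have hae := ae_eq_of_ae_le_of_lintegral_le (Filter.Eventually.of_forall (hkey S hS hSQ)) hIfin
      (measurable_section_crossSet P hS).aemeasurable hIeq.ge
    have hgood : ∀ s u ε : ℝ, 0 < ε → ∃ s' ∈ Set.Ioo s (s + ε), ∃ u' ∈ Set.Ioo u (u + ε),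
        P (Set.Iio (u' + s') ∩ S ⁻¹' Set.Iic u') =
          P (Set.Iio (u' + s') ∩ T ⁻¹' Set.Iic u') := by
      intro s u ε hε
      -- the box has positive mass because `G` is strictly increasing
      have hbox : (G.measure.prod volume) (Set.Ioo s (s + ε) ×ˢ Set.Ioo u (u + ε)) ≠ 0 := by
        rw [Measure.prod_prod, mul_ne_zero_iff]
        constructor
        · have hsub : Set.Ioc s (s + ε / 2) ⊆ Set.Ioo s (s + ε) := fun x hx =>
            ⟨hx.1, by linarith [hx.2]⟩
          refine (lt_of_lt_of_le ?_ (measure_mono hsub)).ne'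
          rw [G.measure_Ioc, ENNReal.ofReal_pos]
          exact sub_pos.2 (hGmono (by linarith))
        · simpa using hε
      obtain ⟨⟨s', u'⟩, ⟨hs', hu'⟩, hz⟩ :
          ∃ z ∈ Set.Ioo s (s + ε) ×ˢ Set.Ioo u (u + ε),
            P {x | ((x, T x), z) ∈ crossSet} = P {x | ((x, S x), z) ∈ crossSet} := by
        by_contra hcon
        push Not at hcon
        exact hbox (measure_mono_null (fun z hz => hcon z hz) (ae_iff.1 hae))
      refine ⟨s', hs', u', hu', ?_⟩
      rw [section_crossSet, section_crossSet] at hz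
      have hTm := hT (measurableSet_Iic (a := u'))
      have hSm := hS (measurableSet_Iic (a := u'))
      split_ifs at hz
      · have h1 := measure_inter_add_sdiff (μ := P) (T ⁻¹' Set.Iic u')
          (measurableSet_Iio (a := u' + s'))
        rw [hPA S hS hSQ, hz, ← measure_inter_add_sdiff (μ := P) (S ⁻¹' Set.Iic u')
          (measurableSet_Iio (a := u' + s'))] at h1
        rw [Set.inter_comm, Set.inter_comm (Set.Iio _)]
        exact ((ENNReal.add_left_inj (measure_ne_top _ _)).1 h1).symm
      · have h1 := measure_inter_add_sdiff (μ := P) (Set.Iio (u' + s')) hTm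
        rw [hz, ← measure_inter_add_sdiff (μ := P) (Set.Iio (u' + s')) hSm] at h1
        exact ((ENNReal.add_left_inj (measure_ne_top _ _)).1 h1).symm
    have hST : S =ᵐ[P] T := ae_eq_of_forall_Iic hS hT fun v u =>
      le_antisymm (measure_Iic_inter_le hT hgood v u)
        (measure_Iic_inter_le hS (fun s u ε hε => by
          obtain ⟨s', hs', u', hu', he⟩ := hgood s u ε hε
          exact ⟨s', hs', u', hu', he.symm⟩) v u)
    exact hST.trans hTeq.symm
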